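/- arXiv:2108.05474 — 2 statements merged into one kernel-verified Lean document; each statement's English description precedes it below -/
import Mathlib

section
/- Let (r_k) be a sequence of positive integers with r_k > k for all k and r_k/k → 1 as k → ∞. Then f(k; r_k)/k² → 1/2 as k → ∞; that is, f(k; r_k) = (1/2 ± o(1))k². -/
/-- A word `σ ∈ [r]^n` contains a permutation `τ ∈ S_k` as a pattern. -/
def ContainsPattern {n r k : ℕ} (σ : Fin n → Fin r) (τ : Equiv.Perm (Fin k)) : Prop :=
  ∃ i : Fin k → Fin n, StrictMono i ∧ ∀ j j' : Fin k, σ (i j) < σ (i j') ↔ τ j < τ j'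

/-- A word `σ ∈ [r]^n` is a `k`-superpattern. -/
def IsSuperpattern {n r : ℕ} (k : ℕ) (σ : Fin n → Fin r) : Prop :=
  ∀ τ : Equiv.Perm (Fin k), ContainsPattern σ τ

/-- `f(k; r)`: the minimum `n` such that some `σ ∈ [r]^n` is a `k`-superpattern. -/
noncomputable def minSuperpatternLength (k r : ℕ) : ℕ :=
  sInf {n : ℕ | ∃ σ : Fin n → Fin r, IsSuperpattern k σ}

/-!
**Upper bound.** A permutation embeds greedily into the zigzag word, whose runs alternately list the
even letters increasingly and the odd letters decreasingly. The number of runs used by `τ` and by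
the shifted word `τ + 1` add up to a constant, so `k` runs of length `k / 2 + 1` suffice for one of
the two.

**Lower bound.** Cut the pattern into `M` blocks of length `m = ⌊k / M⌋`. In any occurrence of the
pattern, some block lies in a window of length `n / M` of the word. Greedy embedding, with weight
`z = exp (-t / r)` per consumed letter, shows that a window contains at most
`(z + z ^ 2 + ⋯ + z ^ r) ^ m * z ^ (-n / M)` words of length `m`, whereas about `r ^ m` words with
distinct letters are needed: since `r = (1 + o(1)) k`, there are only `exp (o(k))` sets of `k`
letters, and since `m` is small compared to `r`, falling factorials lose little against powers.
Taking logarithms gives `n ≥ (1 / 2 - o(1)) k ^ 2` as `k → ∞`, then `M → ∞`, then `t → 0`.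
-/

section Zigzag

/-- The letter at position `i` of the zigzag word over `{0, …, k}`, which consists of runs of length
`k / 2 + 1`: the even runs list the even letters in increasing order, the odd runs list the odd
letters in decreasing order. For even `k` there is one odd letter too few, and an odd run starts
with `k` as a filler. -/
def zigzagLetter (k i : ℕ) : ℕ :=
  if i / (k / 2 + 1) % 2 = 0 then 2 * (i % (k / 2 + 1))
  else min k (2 * (k / 2 - i % (k / 2 + 1)) + 1)

/-- The position of the letter `a` inside each run of the zigzag word over `{0, …, k}` that has the
parity of `a`. -/
def zigzagOffset (k a : ℕ) : ℕ := if a % 2 = 0 then a / 2 else k / 2 - a / 2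

/-- The position of the letter `a` in the run `ρ` of the zigzag word over `{0, …, k}`, provided that
`a` and `ρ` have the same parity. -/
def zigzagPos (k ρ a : ℕ) : ℕ := ρ * (k / 2 + 1) + zigzagOffset k a

/-- How many runs of the zigzag word to advance from an occurrence of `a` to reach the next
occurrence of `b`. -/
def zigzagGap (a b : ℕ) : ℕ :=
  if a % 2 ≠ b % 2 then 1
  else if a % 2 = 0 then if a < b then 0 else 2
  else if b < a then 0 else 2

/-- The run of the zigzag word that contains the letter `v i` when the letters `v 0, v 1, …` are
embedded greedily. -/
def zigzagRun (v : ℕ → ℕ) : ℕ → ℕ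
  | 0 => v 0 % 2
  | i + 1 => zigzagRun v i + zigzagGap (v i) (v (i + 1))

lemma zigzagLetter_le (k i : ℕ) : zigzagLetter k i ≤ k := by
  have : i % (k / 2 + 1) < k / 2 + 1 := Nat.mod_lt _ (Nat.succ_pos _)
  rw [zigzagLetter]
  split_ifs <;> lia

lemma zigzagOffset_lt {k a : ℕ} (ha : a ≤ k) : zigzagOffset k a < k / 2 + 1 := by
  rw [zigzagOffset]
  split_ifs <;> lia

lemma zigzagLetter_zigzagPos {k ρ a : ℕ} (ha : a ≤ k) (hρ : ρ % 2 = a % 2) :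
    zigzagLetter k (zigzagPos k ρ a) = a := by
  have hdiv : zigzagPos k ρ a / (k / 2 + 1) = ρ := by
    rw [zigzagPos, mul_comm, Nat.mul_add_div (Nat.succ_pos _),
      Nat.div_eq_of_lt (zigzagOffset_lt ha), add_zero]
  have hmod : zigzagPos k ρ a % (k / 2 + 1) = zigzagOffset k a := by
    rw [zigzagPos, mul_comm, Nat.mul_add_mod, Nat.mod_eq_of_lt (zigzagOffset_lt ha)]
  rw [zigzagLetter, hdiv, hmod, zigzagOffset]
  split_ifs <;> lia

lemma zigzagPos_lt_zigzagPos_add_zigzagGap {k a b : ℕ} (ha : a ≤ k) (hb : b ≤ k) (ρ : ℕ) :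
    zigzagPos k ρ a < zigzagPos k (ρ + zigzagGap a b) b := by
  simp only [zigzagPos, zigzagOffset, zigzagGap, add_mul]
  split_ifs <;> lia

lemma zigzagRun_mod_two (v : ℕ → ℕ) (i : ℕ) : zigzagRun v i % 2 = v i % 2 := by
  induction i with
  | zero => exact Nat.mod_mod _ _
  | succ i ih =>
    rw [zigzagRun, zigzagGap]
    split_ifs <;> lia

lemma monotone_zigzagRun (v : ℕ → ℕ) : Monotone (zigzagRun v) :=
  monotone_nat_of_le_succ fun _ => Nat.le_add_right _ _

-- Shifting all letters by one swaps the two kinds of runs, and so exchanges the gaps 0 and 2.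
lemma zigzagRun_add_zigzagRun_succ {v : ℕ → ℕ} (hv : ∀ i, v i ≠ v (i + 1)) (i : ℕ) :
    zigzagRun v i + zigzagRun (fun j => v j + 1) i = 2 * i + 1 := by
  induction i with
  | zero =>
    simp only [zigzagRun]
    lia
  | succ i ih =>
    have hgap : zigzagGap (v i) (v (i + 1)) + zigzagGap (v i + 1) (v (i + 1) + 1) = 2 := by
      have := hv i
      simp only [zigzagGap]
      split_ifs <;> lia
    simp only [zigzagRun]
    lia

lemma exists_zigzagRun_add_le {v : ℕ → ℕ} (hv : ∀ i, v i ≠ v (i + 1)) (i : ℕ) :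
    ∃ s ≤ 1, zigzagRun (fun j => v j + s) i ≤ i := by
  have hsum := zigzagRun_add_zigzagRun_succ hv i
  rcases le_or_gt (zigzagRun v i) i with h | h
  · exact ⟨0, zero_le_one, h⟩
  · exact ⟨1, le_rfl, by lia⟩

lemma exists_strictMono_zigzagLetter_eq {k : ℕ} {v : ℕ → ℕ} (hv : ∀ i < k, v i ≤ k)
    (hrun : zigzagRun v (k - 1) ≤ k - 1) :
    ∃ p : Fin k → Fin (k * (k / 2 + 1)), StrictMono p ∧ ∀ i, zigzagLetter k (p i) = v i := by
  have hlt : ∀ i < k, zigzagPos k (zigzagRun v i) (v i) < k * (k / 2 + 1) := by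
    intro i hi
    have hlast : zigzagRun v i + 1 ≤ k := by
      have : zigzagRun v i ≤ zigzagRun v (k - 1) := monotone_zigzagRun v (by lia)
      lia
    calc zigzagPos k (zigzagRun v i) (v i)
        < (zigzagRun v i + 1) * (k / 2 + 1) := by
          rw [zigzagPos, add_one_mul]
          exact Nat.add_lt_add_left (zigzagOffset_lt (hv i hi)) _
      _ ≤ k * (k / 2 + 1) := Nat.mul_le_mul_right _ hlast
  have hmono : StrictMonoOn (fun i => zigzagPos k (zigzagRun v i) (v i)) (Set.Iio k) :=
    strictMonoOn_of_lt_succ Set.ordConnected_Iio fun i _ hi hi' =>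
      zigzagPos_lt_zigzagPos_add_zigzagGap (hv i hi) (hv (i + 1) hi') _
  exact ⟨fun i => ⟨_, hlt i i.2⟩, fun i j hij => hmono i.2 j.2 hij,
    fun i => zigzagLetter_zigzagPos (hv i i.2) (zigzagRun_mod_two v i)⟩

theorem exists_isSuperpattern_of_lt {k r : ℕ} (hkr : k < r) :
    ∃ σ : Fin (k * (k / 2 + 1)) → Fin r, IsSuperpattern k σ := by
  refine ⟨fun i => ⟨zigzagLetter k i, (zigzagLetter_le k i).trans_lt hkr⟩, fun τ => ?_⟩
  let v : Equiv.Perm ℕ := τ.extendDomain Fin.equivSubtype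
  have hvτ (i : Fin k) : v i = τ i := τ.extendDomain_apply_image Fin.equivSubtype i
  have hvk : ∀ i < k, v i < k := fun i hi => (hvτ ⟨i, hi⟩).trans_lt (τ _).2
  have hvv (i : ℕ) : v i ≠ v (i + 1) := v.injective.ne i.succ_ne_self.symm
  obtain ⟨s, hs, hrun⟩ := exists_zigzagRun_add_le hvv (k - 1)
  obtain ⟨p, hp, hpv⟩ := exists_strictMono_zigzagLetter_eq
    (fun i hi => by have := hvk i hi; lia) hrun
  refine ⟨p, hp, fun j j' => ?_⟩
  rw [Fin.mk_lt_mk, hpv, hpv, hvτ, hvτ, add_lt_add_iff_right, Fin.val_fin_lt]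

lemma minSuperpatternLength_le {k r : ℕ} (hkr : k < r) :
    minSuperpatternLength k r ≤ k * (k / 2 + 1) :=
  Nat.sInf_le (exists_isSuperpattern_of_lt hkr)

lemma exists_isSuperpattern_minSuperpatternLength {k r : ℕ} (hkr : k < r) :
    ∃ σ : Fin (minSuperpatternLength k r) → Fin r, IsSuperpattern k σ :=
  Nat.sInf_mem (s := {n | ∃ σ : Fin n → Fin r, IsSuperpattern k σ})
    ⟨_, exists_isSuperpattern_of_lt hkr⟩

end Zigzag

section Counting

open Finset

lemma sum_le_sum_range_of_card_le {R : Type*} [AddCommMonoid R] [PartialOrder R]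
    [IsOrderedAddMonoid R] {f : ℕ → R} (hf : Antitone f) (hf₀ : ∀ i, 0 ≤ f i) {T : Finset ℕ}
    {r : ℕ} (hT : #T ≤ r) : ∑ d ∈ T, f d ≤ ∑ d ∈ range r, f d := by
  have hcard : #(T \ range r) ≤ #(range r \ T) := card_sdiff_le_card_sdiff_iff.2 (by simpa)
  have hdiff : ∑ d ∈ T \ range r, f d ≤ ∑ d ∈ range r \ T, f d :=
    calc ∑ d ∈ T \ range r, f d
        ≤ #(T \ range r) • f r :=
          sum_le_card_nsmul _ _ _ fun d hd => hf (by simpa using (mem_sdiff.1 hd).2)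
      _ ≤ #(range r \ T) • f r := nsmul_le_nsmul_left (hf₀ r) hcard
      _ ≤ ∑ d ∈ range r \ T, f d :=
          card_nsmul_le_sum _ _ _ fun d hd => hf (mem_range.1 (mem_sdiff.1 hd).1).le
  rw [← sum_inter_add_sum_sdiff T (range r), ← sum_inter_add_sum_sdiff (range r) T, inter_comm]
  gcongr

lemma exists_chunk_sublist_window {α : Type*} {L m M : ℕ} {u w : List α} (huw : u.Sublist w)
    (hw : w.length < M * (L + 1)) :
    ∃ j < M, ∃ a ≤ w.length, ((u.drop (j * m)).take m).Sublist ((w.drop a).take L) := by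
  induction M generalizing u w with
  | zero => simp at hw
  | succ M ih =>
    obtain ⟨w₁, w₂, rfl, hhead, htail⟩ :=
      List.append_sublist_iff.1 ((u.take_append_drop m).symm ▸ huw)
    rcases Nat.lt_or_ge L w₁.length with hlong | hshort
    · obtain ⟨j, hj, a, ha, hja⟩ := ih htail (by simp only [List.length_append] at hw; lia)
      refine ⟨j + 1, by lia, w₁.length + a, by simpa using ha, ?_⟩
      rw [add_one_mul, add_comm, List.drop_length_add_append]
      rwa [List.drop_drop] at hja
    · refine ⟨0, by lia, 0, by lia, ?_⟩
      simpa [List.take_append, List.take_of_length_le hshort] using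
        hhead.trans (List.sublist_append_left _ _)

lemma toFinset_sublistsLen_succ_subset {α : Type*} [DecidableEq α] (w : List α) (m : ℕ) :
    (w.sublistsLen (m + 1)).toFinset ⊆ w.toFinset.biUnion fun x =>
      ((w.drop (w.idxOf x + 1)).sublistsLen m).toFinset.image (x :: ·) := by
  intro l hl
  obtain ⟨hlw, hlen⟩ := List.mem_sublistsLen.1 (List.mem_toFinset.1 hl)
  obtain ⟨x, l, rfl⟩ := List.exists_cons_of_length_eq_add_one hlen
  obtain ⟨w₁, w₂, rfl, hx, hl'⟩ := List.cons_sublist_iff.1 hlw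
  have hidx : (w₁ ++ w₂).idxOf x + 1 ≤ w₁.length := by
    rw [List.idxOf_append_of_mem hx]
    exact List.idxOf_lt_length_of_mem hx
  have hdrop : l.Sublist ((w₁ ++ w₂).drop ((w₁ ++ w₂).idxOf x + 1)) := by
    refine hl'.trans ?_
    simpa using List.drop_sublist_drop_left (w₁ ++ w₂) hidx
  simp only [mem_biUnion, mem_image, List.mem_toFinset, List.mem_sublistsLen]
  exact ⟨x, List.mem_append_left _ hx, l, ⟨hdrop, by simpa using hlen⟩, rfl⟩

section Sublists

variable {α : Type*} [Fintype α] [DecidableEq α] {z : ℝ}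

lemma sum_pow_idxOf_succ_le (hz₀ : 0 ≤ z) (hz₁ : z ≤ 1) (w : List α) :
    ∑ x ∈ w.toFinset, z ^ (w.idxOf x + 1) ≤ ∑ d ∈ range (Fintype.card α), z ^ (d + 1) := by
  have hinj : Set.InjOn w.idxOf w.toFinset := fun x hx y _ hxy =>
    (List.idxOf_inj (List.mem_toFinset.1 hx)).1 hxy
  rw [← sum_image (f := fun d => z ^ (d + 1)) hinj]
  exact sum_le_sum_range_of_card_le
    (fun i j hij => pow_le_pow_of_le_one hz₀ hz₁ (by lia)) (fun i => by positivity)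
    (card_image_le.trans (card_le_univ _))

-- Embed greedily: distinct first letters sit at distinct first positions of `w`, so they consume
-- distinct numbers of letters, and a step that consumes `d` letters is weighted by `z ^ d`.
theorem card_sublistsLen_mul_pow_length_le (hz₀ : 0 ≤ z) (hz₁ : z ≤ 1) (m : ℕ) (w : List α) :
    (#(w.sublistsLen m).toFinset : ℝ) * z ^ w.length ≤
      (∑ d ∈ range (Fintype.card α), z ^ (d + 1)) ^ m := by
  induction m generalizing w with
  | zero => simpa using pow_le_one₀ hz₀ hz₁
  | succ m ih =>
    set G := ∑ d ∈ range (Fintype.card α), z ^ (d + 1)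
    have hcard : #(w.sublistsLen (m + 1)).toFinset ≤
        ∑ x ∈ w.toFinset, #((w.drop (w.idxOf x + 1)).sublistsLen m).toFinset :=
      (card_le_card (toFinset_sublistsLen_succ_subset w m)).trans <|
        card_biUnion_le.trans (sum_le_sum fun _ _ => card_image_le)
    have hsplit : ∀ x ∈ w.toFinset,
        z ^ w.length = z ^ (w.drop (w.idxOf x + 1)).length * z ^ (w.idxOf x + 1) := by
      intro x hx
      have := List.idxOf_lt_length_of_mem (List.mem_toFinset.1 hx)
      rw [← pow_add, List.length_drop]
      congr 1
      lia
    calc (#(w.sublistsLen (m + 1)).toFinset : ℝ) * z ^ w.length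
        ≤ (∑ x ∈ w.toFinset, (#((w.drop (w.idxOf x + 1)).sublistsLen m).toFinset : ℝ)) *
            z ^ w.length := by gcongr; exact_mod_cast hcard
      _ = ∑ x ∈ w.toFinset, (#((w.drop (w.idxOf x + 1)).sublistsLen m).toFinset *
            z ^ (w.drop (w.idxOf x + 1)).length) * z ^ (w.idxOf x + 1) := by
          rw [sum_mul]
          exact sum_congr rfl fun x hx => by rw [hsplit x hx, mul_assoc]
      _ ≤ ∑ x ∈ w.toFinset, G ^ m * z ^ (w.idxOf x + 1) := by gcongr; exact ih _
      _ = G ^ m * ∑ x ∈ w.toFinset, z ^ (w.idxOf x + 1) := (mul_sum _ _ _).symm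
      _ ≤ G ^ m * G := by gcongr; exact sum_pow_idxOf_succ_le hz₀ hz₁ w
      _ = G ^ (m + 1) := (pow_succ _ _).symm

end Sublists

section Embeddings

variable {ι κ α : Type*} [Fintype ι] [Fintype κ] [Fintype α] [DecidableEq α]

lemma card_embedding_trans_eq_le (c : ι ↪ κ) (g : ι ↪ α) :
    #{u : κ ↪ α | c.trans u = g} ≤
      (Fintype.card α - Fintype.card ι).descFactorial (Fintype.card κ - Fintype.card ι) := by
  classical
  let restrict (u : {u : κ ↪ α // c.trans u = g}) :
      ((Set.range c)ᶜ : Set κ) ↪ ((Set.range g)ᶜ : Set α) :=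
    u.1.subtypeMap fun x hx ⟨i, hi⟩ =>
      hx ⟨i, u.1.injective ((DFunLike.congr_fun u.2 i).trans hi)⟩
  have hinj : Function.Injective restrict := by
    rintro ⟨u, rfl⟩ ⟨v, hv⟩ h
    ext x
    by_cases hx : x ∈ Set.range c
    · obtain ⟨i, rfl⟩ := hx
      exact (DFunLike.congr_fun hv i).symm
    · exact congrArg Subtype.val (DFunLike.congr_fun h ⟨x, hx⟩)
  rw [← Fintype.card_subtype]
  refine (Fintype.card_le_of_injective restrict hinj).trans_eq ?_
  rw [Fintype.card_embedding_eq, Fintype.card_compl_set, Fintype.card_compl_set,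
    Set.card_range_of_injective c.injective, Set.card_range_of_injective g.injective]

lemma card_embedding_trans_mem_le (c : ι ↪ κ) (E : Finset (ι ↪ α)) :
    #{u : κ ↪ α | c.trans u ∈ E} ≤
      (Fintype.card α - Fintype.card ι).descFactorial (Fintype.card κ - Fintype.card ι) * #E := by
  refine card_le_mul_card_image_of_maps_to (f := c.trans) (fun u hu => (mem_filter.1 hu).2) _
    fun g _ => ?_
  exact (card_le_card (filter_subset_filter _ (subset_univ _))).trans
    (card_embedding_trans_eq_le c g)

end Embeddings

/-- The embedding of `Fin m` into `Fin k` onto the block of indices `s, …, s + m - 1`. -/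
def blockEmb {m k : ℕ} (s : ℕ) (h : s + m ≤ k) : Fin m ↪ Fin k :=
  (Fin.natAddEmb s).trans (Fin.castLEEmb h)

lemma ofFn_blockEmb_trans {α : Type*} {m k s : ℕ} (h : s + m ≤ k) (u : Fin k ↪ α) :
    List.ofFn ((blockEmb s h).trans u) = ((List.ofFn u).drop s).take m :=
  List.ext_getElem (by simp; lia) fun i _ _ => by simp [blockEmb]

section Fin

variable {α : Type*} [Fintype α] [DecidableEq α] {z : ℝ}

lemma card_embedding_sublist_mul_pow_le (hz₀ : 0 ≤ z) (hz₁ : z ≤ 1) (m : ℕ) {L : ℕ} {w : List α}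
    (hw : w.length ≤ L) :
    (#{v : Fin m ↪ α | (List.ofFn v).Sublist w} : ℝ) * z ^ L ≤
      (∑ d ∈ range (Fintype.card α), z ^ (d + 1)) ^ m := by
  have hcard : #{v : Fin m ↪ α | (List.ofFn v).Sublist w} ≤ #(w.sublistsLen m).toFinset :=
    card_le_card_of_injOn (fun v => List.ofFn v)
      (fun v hv => by simpa using hv)
      (fun v _ v' _ h => DFunLike.coe_injective (List.ofFn_injective h))
  calc (#{v : Fin m ↪ α | (List.ofFn v).Sublist w} : ℝ) * z ^ L
      ≤ #(w.sublistsLen m).toFinset * z ^ w.length := by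
        gcongr ?_ * ?_
        · exact_mod_cast hcard
        · exact pow_le_pow_of_le_one hz₀ hz₁ hw
    _ ≤ _ := card_sublistsLen_mul_pow_length_le hz₀ hz₁ m w

-- One of the `M` consecutive length-`m` blocks of `u` already embeds in a window of `w` of length
-- `w.length / M`; the letters of `u` outside of this block are counted trivially.
lemma card_embedding_sublist_le_sum {k m M : ℕ} (hM : 0 < M) (hMm : M * m ≤ k) (w : List α) :
    #{u : Fin k ↪ α | (List.ofFn u).Sublist w} ≤
      ∑ _j ∈ range M, ∑ a ∈ range (w.length + 1),
        (Fintype.card α - m).descFactorial (k - m) *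
          #{v : Fin m ↪ α | (List.ofFn v).Sublist ((w.drop a).take (w.length / M))} := by
  have hblock (j : Fin M) : j * m + m ≤ k :=
    (add_one_mul (j : ℕ) m).symm.trans_le ((Nat.mul_le_mul_right m j.2).trans hMm)
  let E (a : ℕ) : Finset (Fin m ↪ α) :=
    {v | (List.ofFn v).Sublist ((w.drop a).take (w.length / M))}
  have hcover : ({u : Fin k ↪ α | (List.ofFn u).Sublist w} : Finset _) ⊆
      univ.biUnion fun j : Fin M => (range (w.length + 1)).biUnion fun a =>
        {u | (blockEmb (j * m) (hblock j)).trans u ∈ E a} := by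
    intro u hu
    obtain ⟨j, hj, a, ha, hja⟩ :=
      exists_chunk_sublist_window (m := m) (mem_filter.1 hu).2 (Nat.lt_mul_div_succ _ hM)
    simp only [mem_biUnion, mem_univ, true_and, mem_range, mem_filter, E]
    exact ⟨⟨j, hj⟩, a, by lia, by rwa [ofFn_blockEmb_trans]⟩
  rw [← Fin.sum_univ_eq_sum_range (fun _ => _)]
  refine (card_le_card hcover).trans <| card_biUnion_le.trans <| sum_le_sum fun j _ =>
    card_biUnion_le.trans <| sum_le_sum fun a _ => ?_
  simpa using card_embedding_trans_mem_le (blockEmb (j * m) (hblock j)) (E a)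

theorem card_embedding_sublist_mul_pow_div_le {k m M : ℕ} (hM : 0 < M) (hMm : M * m ≤ k)
    (hz₀ : 0 ≤ z) (hz₁ : z ≤ 1) (w : List α) :
    (#{u : Fin k ↪ α | (List.ofFn u).Sublist w} : ℝ) * z ^ (w.length / M) ≤
      M * (w.length + 1) * (∑ d ∈ range (Fintype.card α), z ^ (d + 1)) ^ m *
        (Fintype.card α - m).descFactorial (k - m) := by
  set L := w.length / M
  set D := (Fintype.card α - m).descFactorial (k - m)
  calc (#{u : Fin k ↪ α | (List.ofFn u).Sublist w} : ℝ) * z ^ L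
      ≤ (∑ _j ∈ range M, ∑ a ∈ range (w.length + 1), (D : ℝ) *
          #{v : Fin m ↪ α | (List.ofFn v).Sublist ((w.drop a).take L)}) * z ^ L := by
        gcongr
        exact_mod_cast card_embedding_sublist_le_sum hM hMm w
    _ = ∑ _j ∈ range M, ∑ a ∈ range (w.length + 1), (D : ℝ) *
          (#{v : Fin m ↪ α | (List.ofFn v).Sublist ((w.drop a).take L)} * z ^ L) := by
        simp only [sum_mul, mul_assoc]
    _ ≤ ∑ _j ∈ range M, ∑ _a ∈ range (w.length + 1), (D : ℝ) *
          (∑ d ∈ range (Fintype.card α), z ^ (d + 1)) ^ m := by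
        gcongr
        exact card_embedding_sublist_mul_pow_le hz₀ hz₁ m (List.length_take_le _ _)
    _ = _ := by
        simp only [sum_const, card_range, nsmul_eq_mul]
        push_cast
        ring

end Fin

lemma perm_eq_of_lt_iff_lt {α : Type*} [LinearOrder α] [WellFoundedLT α] {τ τ' : Equiv.Perm α}
    (h : ∀ j j', τ j < τ j' ↔ τ' j < τ' j') : τ = τ' := by
  have hmono : StrictMono (τ' ∘ τ.symm) := fun x y hxy => (h _ _).1 (by simpa using hxy)
  have hid : τ' ∘ τ.symm = id := (hmono.range_inj strictMono_id).1 (by simp [Set.range_comp])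
  ext1 j
  simpa using (congrFun hid (τ j)).symm

lemma ofFn_comp_sublist_ofFn {α : Type*} {m n : ℕ} {i : Fin m → Fin n} (hi : StrictMono i)
    (σ : Fin n → α) : (List.ofFn (σ ∘ i)).Sublist (List.ofFn σ) := by
  have hsorted : (List.ofFn i).SortedLT := hi.sortedLT_ofFn
  have hsub : (List.ofFn i).Sublist (List.finRange n) :=
    List.sublist_of_subperm_of_sortedLE
      (List.subperm_of_subset hsorted.nodup fun j _ => List.mem_finRange j)
      hsorted.sortedLE (List.sortedLT_finRange n).sortedLE
  rw [← List.map_ofFn, List.ofFn_eq_map (f := σ)]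
  exact hsub.map σ

lemma IsSuperpattern.factorial_le_card {n r k : ℕ} {σ : Fin n → Fin r} (hσ : IsSuperpattern k σ) :
    k.factorial ≤ #{u : Fin k ↪ Fin r | (List.ofFn u).Sublist (List.ofFn σ)} := by
  choose i hi hiτ using hσ
  have hinj (τ : Equiv.Perm (Fin k)) : Function.Injective (σ ∘ i τ) := by
    intro j j' h
    refine τ.injective (le_antisymm ?_ ?_)
    · exact not_lt.1 fun hlt => ((hiτ τ j' j).2 hlt).ne' h
    · exact not_lt.1 fun hlt => ((hiτ τ j j').2 hlt).ne h
  let word (τ : Equiv.Perm (Fin k)) : Fin k ↪ Fin r := ⟨σ ∘ i τ, hinj τ⟩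
  have hword : Function.Injective word := fun τ τ' h =>
    perm_eq_of_lt_iff_lt fun j j' => by
      have hval (j : Fin k) : σ (i τ j) = σ (i τ' j) := DFunLike.congr_fun h j
      rw [← hiτ, ← hiτ, hval, hval]
  calc k.factorial = #(univ.image word) := by
        rw [card_image_of_injective _ hword, card_univ, Fintype.card_perm, Fintype.card_fin]
    _ ≤ _ := card_le_card fun u hu => by
        obtain ⟨τ, -, rfl⟩ := mem_image.1 hu
        exact mem_filter.2 ⟨mem_univ _, ofFn_comp_sublist_ofFn (hi τ) σ⟩

theorem IsSuperpattern.descFactorial_mul_pow_le {n r k m M : ℕ} {σ : Fin n → Fin r}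
    (hσ : IsSuperpattern k σ) (hM : 0 < M) (hMm : M * m ≤ k) {z : ℝ} (hz₀ : 0 ≤ z) (hz₁ : z ≤ 1) :
    (r.descFactorial m : ℝ) * z ^ (n / M) ≤
      M * (n + 1) * (∑ d ∈ range r, z ^ (d + 1)) ^ m * r.choose k := by
  have hcount := card_embedding_sublist_mul_pow_div_le hM hMm hz₀ hz₁ (List.ofFn σ)
  rw [List.length_ofFn, Fintype.card_fin] at hcount
  have hfact : ((r - m).descFactorial (k - m) : ℝ) * r.descFactorial m =
      k.factorial * r.choose k := by
    have hmk : m ≤ k := (Nat.le_mul_of_pos_left m hM).trans hMm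
    exact_mod_cast (Nat.descFactorial_mul_descFactorial hmk).trans
      (Nat.descFactorial_eq_factorial_mul_choose r k)
  refine le_of_mul_le_mul_left ?_ (Nat.cast_pos.2 k.factorial_pos : (0 : ℝ) < k.factorial)
  calc (k.factorial : ℝ) * (r.descFactorial m * z ^ (n / M))
      = r.descFactorial m * (k.factorial * z ^ (n / M)) := by ring
    _ ≤ r.descFactorial m * (M * (n + 1) * (∑ d ∈ range r, z ^ (d + 1)) ^ m *
          (r - m).descFactorial (k - m)) := by
        refine mul_le_mul_of_nonneg_left (le_trans ?_ hcount) (Nat.cast_nonneg _)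
        gcongr
        exact_mod_cast hσ.factorial_le_card
    _ = M * (n + 1) * (∑ d ∈ range r, z ^ (d + 1)) ^ m *
          ((r - m).descFactorial (k - m) * r.descFactorial m) := by ring
    _ = _ := by rw [hfact]; ring

end Counting

section Asymptotics

open Finset Filter Topology Real

lemma sum_exp_neg_div_pow_succ_le {t : ℝ} (ht₀ : 0 ≤ t) (ht₁ : t ≤ 1) (r : ℕ) :
    ∑ d ∈ range r, exp (-(t / r)) ^ (d + 1) ≤ r * exp (t ^ 2 - t / 2) := by
  rcases r.eq_zero_or_pos with rfl | hr
  · simp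
  have hr' : (0 : ℝ) < r := mod_cast hr
  have hterm : ∀ d ∈ range r, exp (-(t / r)) ^ (d + 1) ≤ 1 - t / r * ((d : ℝ) + 1) + t ^ 2 := by
    intro d hd
    have hdr : (d : ℝ) + 1 ≤ r := mod_cast mem_range.1 hd
    set y := t / r * ((d : ℝ) + 1) with hy
    have hy₀ : 0 ≤ y := by positivity
    have hyt : y ≤ t := by
      calc y ≤ t / r * r := mul_le_mul_of_nonneg_left hdr (by positivity)
        _ = t := div_mul_cancel₀ _ hr'.ne'
    have hy₁ : |-y| ≤ 1 := by rw [abs_neg, abs_of_nonneg hy₀]; exact hyt.trans ht₁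
    have hexp : exp (-y) - 1 - -y ≤ (-y) ^ 2 :=
      (le_abs_self _).trans (abs_exp_sub_one_sub_id_le hy₁)
    calc exp (-(t / r)) ^ (d + 1) = exp (-y) := by
          rw [← exp_nat_mul, hy]
          push_cast
          ring_nf
      _ ≤ 1 - y + y ^ 2 := by linarith
      _ ≤ 1 - y + t ^ 2 := by gcongr
  have hid : ∑ d ∈ range r, ((d : ℝ) + 1) = r * (r + 1) / 2 := by
    have := sum_range_id_mul_two (r + 1)
    rw [sum_range_succ'] at this
    have : (∑ d ∈ range r, ((d : ℝ) + 1)) * 2 = (r + 1) * r := mod_cast this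
    linarith
  calc ∑ d ∈ range r, exp (-(t / r)) ^ (d + 1)
      ≤ ∑ d ∈ range r, (1 - t / r * ((d : ℝ) + 1) + t ^ 2) := sum_le_sum hterm
    _ = r * (t ^ 2 - t / 2 + 1) - t / 2 := by
        rw [sum_add_distrib, sum_sub_distrib, ← mul_sum, hid]
        simp only [sum_const, card_range, nsmul_eq_mul]
        field_simp
        ring
    _ ≤ r * (t ^ 2 - t / 2 + 1) := by linarith
    _ ≤ r * exp (t ^ 2 - t / 2) := by
        gcongr
        exact add_one_le_exp _

lemma IsSuperpattern.one_sub_div_pow_mul_exp_le {n r k m M : ℕ} {σ : Fin n → Fin r}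
    (hσ : IsSuperpattern k σ) (hM : 0 < M) (hMm : M * m ≤ k) (hmr : m < r) {t : ℝ} (ht₀ : 0 ≤ t)
    (ht₁ : t ≤ 1) :
    (1 - (m : ℝ) / r) ^ m * exp (m * (t / 2 - t ^ 2) - t / r * (n / M)) ≤
      M * (n + 1) * r.choose k := by
  have hr : (0 : ℝ) < r := mod_cast (Nat.zero_le m).trans_lt hmr
  have hdesc : (r : ℝ) ^ m * (1 - (m : ℝ) / r) ^ m ≤ r.descFactorial m := by
    calc (r : ℝ) ^ m * (1 - (m : ℝ) / r) ^ m = ((r - m : ℕ) : ℝ) ^ m := by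
          rw [← mul_pow, mul_one_sub, mul_div_cancel₀ _ hr.ne', Nat.cast_sub hmr.le]
      _ ≤ ((r + 1 - m : ℕ) : ℝ) ^ m := by gcongr; lia
      _ ≤ r.descFactorial m := mod_cast Nat.pow_sub_le_descFactorial r m
  have hweight : exp (-(t / r * (n / M))) ≤ exp (-(t / r)) ^ (n / M) := by
    rw [← exp_nat_mul, exp_le_exp, mul_neg, neg_le_neg_iff, mul_comm]
    gcongr
    exact Nat.cast_div_le
  have hcount : (r : ℝ) ^ m * ((1 - (m : ℝ) / r) ^ m * exp (-(t / r * (n / M)))) ≤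
      M * (n + 1) * (r * exp (t ^ 2 - t / 2)) ^ m * r.choose k := by
    calc (r : ℝ) ^ m * ((1 - (m : ℝ) / r) ^ m * exp (-(t / r * (n / M))))
        = (r : ℝ) ^ m * (1 - (m : ℝ) / r) ^ m * exp (-(t / r * (n / M))) := (mul_assoc _ _ _).symm
      _ ≤ r.descFactorial m * exp (-(t / r)) ^ (n / M) := by gcongr
      _ ≤ M * (n + 1) * (∑ d ∈ range r, exp (-(t / r)) ^ (d + 1)) ^ m * r.choose k :=
          hσ.descFactorial_mul_pow_le hM hMm (exp_nonneg _)
            (exp_le_one_iff.2 (neg_nonpos.2 (by positivity)))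
      _ ≤ M * (n + 1) * (r * exp (t ^ 2 - t / 2)) ^ m * r.choose k := by
          gcongr
          exact sum_exp_neg_div_pow_succ_le ht₀ ht₁ r
  refine le_of_mul_le_mul_left ?_ (by positivity : (0 : ℝ) < r ^ m * exp (m * (t ^ 2 - t / 2)))
  calc (r : ℝ) ^ m * exp (m * (t ^ 2 - t / 2)) *
        ((1 - (m : ℝ) / r) ^ m * exp (m * (t / 2 - t ^ 2) - t / r * (n / M)))
      = (r : ℝ) ^ m * ((1 - (m : ℝ) / r) ^ m *
          (exp (m * (t ^ 2 - t / 2)) * exp (m * (t / 2 - t ^ 2) - t / r * (n / M)))) := by ring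
    _ = (r : ℝ) ^ m * ((1 - (m : ℝ) / r) ^ m * exp (-(t / r * (n / M)))) := by
        rw [← exp_add]
        ring_nf
    _ ≤ M * (n + 1) * (r * exp (t ^ 2 - t / 2)) ^ m * r.choose k := hcount
    _ = r ^ m * exp (m * (t ^ 2 - t / 2)) * (M * (n + 1) * r.choose k) := by
        rw [mul_pow, ← exp_nat_mul]
        ring

lemma log_choose_le {k r : ℕ} (hkr : k ≤ r) (y : ℝ) :
    log (r.choose k) ≤ exp (-y) * r + y * (r - k) := by
  have hpow : exp (-y) ^ (r - k) * r.choose k ≤ exp (exp (-y) * r) := by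
    calc exp (-y) ^ (r - k) * r.choose k
        = 1 ^ k * exp (-y) ^ (r - k) * r.choose k := by rw [one_pow, one_mul]
      _ ≤ ∑ i ∈ range (r + 1), 1 ^ i * exp (-y) ^ (r - i) * r.choose i :=
          single_le_sum (f := fun i => (1 : ℝ) ^ i * exp (-y) ^ (r - i) * r.choose i)
            (fun i _ => by positivity) (mem_range.2 (Nat.lt_succ_of_le hkr))
      _ = (exp (-y) + 1) ^ r := by rw [← add_pow, add_comm]
      _ ≤ exp (exp (-y)) ^ r := by gcongr; exact add_one_le_exp _
      _ = exp (exp (-y) * r) := by rw [← exp_nat_mul, mul_comm]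
  have hC : (0 : ℝ) < r.choose k := mod_cast Nat.choose_pos hkr
  have hlog := log_le_log (by positivity) hpow
  rw [log_exp, log_mul (by positivity) hC.ne', log_pow, log_exp, Nat.cast_sub hkr] at hlog
  linarith

lemma tendsto_log_choose_div_atTop {r : ℕ → ℕ} (hr : ∀ k, k ≤ r k)
    (hlim : Tendsto (fun k => (r k : ℝ) / k) atTop (𝓝 1)) :
    Tendsto (fun k => log ((r k).choose k) / k) atTop (𝓝 0) := by
  refine tendsto_order.2 ⟨fun a ha => .of_forall fun k => ha.trans_le (by positivity), ?_⟩
  intro a ha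
  obtain ⟨y, hy⟩ : ∃ y : ℝ, exp (-y) < a := ⟨-log (a / 2), by rw [neg_neg, exp_log] <;> linarith⟩
  have hbound : Tendsto (fun k => exp (-y) * ((r k : ℝ) / k) + y * ((r k : ℝ) / k - 1)) atTop
      (𝓝 (exp (-y))) := by
    simpa using (hlim.const_mul (exp (-y))).add ((hlim.sub_const 1).const_mul y)
  filter_upwards [hbound.eventually_lt_const hy, eventually_gt_atTop 0] with k hk hk₀
  refine lt_of_le_of_lt ?_ hk
  have : (0 : ℝ) < k := mod_cast hk₀
  calc log ((r k).choose k) / k ≤ (exp (-y) * r k + y * (r k - k)) / k := by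
        gcongr
        exact log_choose_le (hr k) y
    _ = exp (-y) * ((r k : ℝ) / k) + y * ((r k : ℝ) / k - 1) := by field_simp

lemma tendsto_natDiv_div_atTop (M : ℕ) :
    Tendsto (fun k : ℕ => ((k / M : ℕ) : ℝ) / k) atTop (𝓝 (1 / M)) := by
  refine ((tendsto_nat_floor_mul_div_atTop (by positivity : (0 : ℝ) ≤ 1 / M)).comp
    tendsto_natCast_atTop_atTop).congr fun k => ?_
  simp only [Function.comp, one_div_mul_eq_div, Nat.floor_div_eq_div]

lemma tendsto_log_mul_sq_mul_div_atTop {c : ℝ} (hc : c ≠ 0) {x : ℕ → ℝ} (hx : ∀ k, x k ≠ 0)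
    (hlim : Tendsto (fun k => log (x k) / k) atTop (𝓝 0)) :
    Tendsto (fun k : ℕ => log (c * k ^ 2 * x k) / k) atTop (𝓝 0) := by
  have hconst : Tendsto (fun k : ℕ => log c / k) atTop (𝓝 0) :=
    tendsto_const_div_atTop_nhds_zero_nat _
  have hlog : Tendsto (fun k : ℕ => log k / k) atTop (𝓝 0) :=
    isLittleO_log_id_atTop.tendsto_div_nhds_zero.comp tendsto_natCast_atTop_atTop
  have hsum := (hconst.add (hlog.const_mul 2)).add hlim
  simp only [mul_zero, add_zero] at hsum
  refine hsum.congr' ?_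
  filter_upwards [eventually_gt_atTop 0] with k hk
  have hk₀ : (k : ℝ) ≠ 0 := Nat.cast_ne_zero.2 hk.ne'
  rw [log_mul (mul_ne_zero hc (pow_ne_zero _ hk₀)) (hx k), log_mul hc (pow_ne_zero _ hk₀), log_pow]
  push_cast
  ring

/-- The lower bound for `f(k; r) / k ^ 2` that the counting argument yields from blocks of length
`⌊k / M⌋` and the weight `exp (-t / r)`. -/
noncomputable def lengthLowerBound (M : ℕ) (t : ℝ) (k r : ℕ) : ℝ :=
  M / t * (r / k) * ((k / M : ℕ) / k * (log (1 - (k / M : ℕ) / r) + (t / 2 - t ^ 2)) -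
    log (M * k ^ 2 * r.choose k) / k)

lemma lengthLowerBound_le {M k r : ℕ} {t : ℝ} (hM : 2 ≤ M) (ht₀ : 0 < t) (ht₁ : t ≤ 1)
    (hk : 3 ≤ k) (hkr : k < r) :
    lengthLowerBound M t k r ≤ minSuperpatternLength k r / (k : ℝ) ^ 2 := by
  obtain ⟨σ, hσ⟩ := exists_isSuperpattern_minSuperpatternLength hkr
  have hlen : minSuperpatternLength k r + 1 ≤ k ^ 2 := by
    have := minSuperpatternLength_le hkr
    have : k / 2 + 2 ≤ k := by lia
    nlinarith
  have hMk : M * (k / M) ≤ k := Nat.mul_div_le k M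
  rw [lengthLowerBound]
  generalize minSuperpatternLength k r = n at *
  generalize k / M = m at *
  have hmr : m < r := by nlinarith
  have : (0 : ℝ) < k := Nat.cast_pos.2 (by lia)
  have hr₀ : (0 : ℝ) < r := Nat.cast_pos.2 (by lia)
  have : (0 : ℝ) < M := Nat.cast_pos.2 (by lia)
  have hsub : 0 < 1 - (m : ℝ) / r := by
    rw [sub_pos, div_lt_one hr₀]
    exact_mod_cast hmr
  have hcount : (1 - (m : ℝ) / r) ^ m * exp (m * (t / 2 - t ^ 2) - t / r * (n / M)) ≤
      M * k ^ 2 * r.choose k := by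
    refine (hσ.one_sub_div_pow_mul_exp_le (by lia) hMk hmr ht₀.le ht₁).trans ?_
    gcongr
    exact_mod_cast hlen
  have hlog := log_le_log (by positivity) hcount
  rw [log_mul (by positivity) (exp_ne_zero _), log_pow, log_exp] at hlog
  calc M / t * (r / k) * (m / k * (log (1 - (m : ℝ) / r) + (t / 2 - t ^ 2)) -
        log (M * k ^ 2 * r.choose k) / k)
      = M * r / (t * k ^ 2) * (m * log (1 - (m : ℝ) / r) + m * (t / 2 - t ^ 2) -
          log (M * k ^ 2 * r.choose k)) := by
        field_simp
    _ ≤ M * r / (t * k ^ 2) * (t / r * (n / M)) := by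
        gcongr
        linarith
    _ = n / (k : ℝ) ^ 2 := by field_simp

lemma tendsto_lengthLowerBound {r : ℕ → ℕ} (hr : ∀ k, k ≤ r k)
    (hlim : Tendsto (fun k => (r k : ℝ) / k) atTop (𝓝 1)) {M : ℕ} (hM : 2 ≤ M) {t : ℝ}
    (ht : t ≠ 0) :
    Tendsto (fun k => lengthLowerBound M t k (r k)) atTop
      (𝓝 (1 / 2 - t + log (1 - 1 / M) / t)) := by
  have hM₁ : (1 : ℝ) < M := Nat.one_lt_cast.2 hM
  have hM₀ : (M : ℝ) ≠ 0 := (zero_lt_one.trans hM₁).ne'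
  have hratio : Tendsto (fun k => ((k / M : ℕ) : ℝ) / r k) atTop (𝓝 (1 / M)) := by
    have hdiv := (tendsto_natDiv_div_atTop M).div hlim one_ne_zero
    rw [div_one] at hdiv
    refine hdiv.congr' ?_
    filter_upwards [eventually_gt_atTop 0] with k hk
    exact div_div_div_cancel_right₀ (Nat.cast_ne_zero.2 hk.ne') _ _
  have hlog : Tendsto (fun k => log (1 - ((k / M : ℕ) : ℝ) / r k)) atTop
      (𝓝 (log (1 - 1 / M))) :=
    (hratio.const_sub 1).log (sub_pos.2 ((div_lt_one (by positivity)).2 hM₁)).ne'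
  have herror := tendsto_log_mul_sq_mul_div_atTop hM₀
    (fun k => Nat.cast_ne_zero.2 (Nat.choose_pos (hr k)).ne') (tendsto_log_choose_div_atTop hr hlim)
  have hlimit := (hlim.const_mul (M / t)).mul
    (((tendsto_natDiv_div_atTop M).mul (hlog.add_const (t / 2 - t ^ 2))).sub herror)
  have hvalue : M / t * 1 * (1 / M * (log (1 - 1 / M) + (t / 2 - t ^ 2)) - 0) =
      1 / 2 - t + log (1 - 1 / M) / t := by
    field_simp
    ring
  exact hvalue ▸ hlimit

lemma eventually_lt_minSuperpatternLength_div_sq {r : ℕ → ℕ} (hr : ∀ k, k < r k)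
    (hlim : Tendsto (fun k => (r k : ℝ) / k) atTop (𝓝 1)) {a : ℝ} (ha : a < 1 / 2) :
    ∀ᶠ k in atTop, a < minSuperpatternLength k (r k) / (k : ℝ) ^ 2 := by
  obtain ⟨t, ht₀, ht⟩ := exists_between (lt_min one_pos (sub_pos.2 ha))
  obtain ⟨ht₁, hta⟩ := lt_min_iff.1 ht
  have hblocks : Tendsto (fun M : ℕ => 1 / 2 - t + log (1 - 1 / M) / t) atTop (𝓝 (1 / 2 - t)) := by
    have hsub : Tendsto (fun M : ℕ => (1 : ℝ) - 1 / M) atTop (𝓝 1) := by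
      simpa using tendsto_one_div_atTop_nhds_zero_nat.const_sub (1 : ℝ)
    simpa using ((hsub.log one_ne_zero).div_const t).const_add (1 / 2 - t)
  obtain ⟨M, haM, hM⟩ :=
    ((hblocks.eventually_const_lt (by linarith : a < 1 / 2 - t)).and (eventually_ge_atTop 2)).exists
  have hbound := tendsto_lengthLowerBound (fun k => (hr k).le) hlim hM ht₀.ne'
  filter_upwards [hbound.eventually_const_lt haM, eventually_ge_atTop 3] with k hak hk
  exact hak.trans_le (lengthLowerBound_le hM ht₀ ht₁.le hk (hr k))

lemma eventually_minSuperpatternLength_div_sq_lt {r : ℕ → ℕ} (hr : ∀ k, k < r k) {a : ℝ}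
    (ha : 1 / 2 < a) :
    ∀ᶠ k in atTop, minSuperpatternLength k (r k) / (k : ℝ) ^ 2 < a := by
  have hbound : Tendsto (fun k : ℕ => (1 : ℝ) / 2 + 1 / k) atTop (𝓝 (1 / 2)) := by
    simpa using tendsto_one_div_atTop_nhds_zero_nat.const_add ((1 : ℝ) / 2)
  filter_upwards [hbound.eventually_lt_const ha, eventually_gt_atTop 0] with k hka hk
  refine lt_of_le_of_lt ?_ hka
  have : (0 : ℝ) < k := mod_cast hk
  calc (minSuperpatternLength k (r k) : ℝ) / (k : ℝ) ^ 2
      ≤ (k * ((k / 2 : ℕ) + 1) : ℕ) / (k : ℝ) ^ 2 := by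
        gcongr
        exact minSuperpatternLength_le (hr k)
    _ ≤ k * (k / 2 + 1) / (k : ℝ) ^ 2 := by
        push_cast
        gcongr
        exact_mod_cast Nat.cast_div_le (α := ℝ) (m := k) (n := 2)
    _ = 1 / 2 + 1 / k := by field_simp

end Asymptotics

/-- If `r_k > k` for all `k` and `r_k / k → 1`, then `f(k; r_k) / k² → 1/2`. -/
theorem superpattern_length_asymptotics (r : ℕ → ℕ) (hr : ∀ k, k < r k)
    (hlim : Filter.Tendsto (fun k => (r k : ℝ) / (k : ℝ)) Filter.atTop (nhds 1)) :
    Filter.Tendsto (fun k => (minSuperpatternLength k (r k) : ℝ) / (k : ℝ)^2)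
      Filter.atTop (nhds (1/2)) :=
  tendsto_order.2 ⟨fun _ ha => eventually_lt_minSuperpatternLength_div_sq hr hlim ha,
    fun _ ha => eventually_minSuperpatternLength_div_sq_lt hr ha⟩
end

section
/- For every word σ ∈ [k]^n there exists a k-DFA D with state set {0,1,…,n} and root 0 such that every permutation τ ∈ S_k that is a pattern of σ satisfies c_D(0, τ) ≤ n (reading τ as the word τ(1),…,τ(k)). Consequently, F(k,n) ≤ G(k,n,n+1). -/
/-- A weighted DFA on the alphabet `[k]` (modelled as `Fin k`) with state type `V`:
a transition function, a root state, and a cost function into `ℕ∞`. -/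
structure WDFA (k : ℕ) (V : Type*) where
  trans : V → Fin k → V
  root : V
  cost : V → Fin k → ℕ∞

/-- The final state of the walk from `v` reading the word `w`. -/
def WDFA.walkEnd {k : ℕ} {V : Type*} (D : WDFA k V) : V → List (Fin k) → V
  | v, [] => v
  | v, t :: w => D.walkEnd (D.trans v t) w

/-- The cost of reading the word `w` starting from state `v`. -/
def WDFA.wordCost {k : ℕ} {V : Type*} (D : WDFA k V) : V → List (Fin k) → ℕ∞
  | _, [] => 0
  | v, t :: w => D.cost v t + D.wordCost (D.trans v t) w

/-- A `k`-DFA: a weighted DFA on alphabet `[k]` in which, at every state `v`, the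
costs `c(v, ·)` form a bijection onto `{1, …, k}`. -/
def WDFA.IsKDFA {k : ℕ} {V : Type*} (D : WDFA k V) : Prop :=
  ∀ v : V, ∃ π : Equiv.Perm (Fin k), ∀ t : Fin k, D.cost v t = (((π t : ℕ) + 1 : ℕ) : ℕ∞)

/-- A permutation `τ ∈ S_k` read as the word `τ(1), …, τ(k)`. -/
def permWord {k : ℕ} (τ : Equiv.Perm (Fin k)) : List (Fin k) :=
  (List.finRange k).map τ

/-- `F(k, n)`: the maximum, over words `σ ∈ [k]^n`, of the number of permutations
`τ ∈ S_k` that `σ` contains as a pattern. -/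
noncomputable def maxPatternCount (k n : ℕ) : ℕ :=
  (Finset.univ : Finset (Fin n → Fin k)).sup fun σ =>
    Nat.card {τ : Equiv.Perm (Fin k) // ContainsPattern σ τ}

/-- `G(k, n, N)`: the maximum, over `k`-DFAs `D` with at most `N` states (modelled with
state set `Fin N`), of the number of permutations `τ ∈ S_k` with `c(root(D), τ) ≤ n`. -/
noncomputable def maxCheapPermCount (k n N : ℕ) : ℕ :=
  sSup {m : ℕ | ∃ D : WDFA k (Fin N), D.IsKDFA ∧
    m = Nat.card {τ : Equiv.Perm (Fin k) // D.wordCost D.root (permWord τ) ≤ (n : ℕ∞)}}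

/-!
The automaton attached to `σ` reads greedily: the state is the part of `σ` still available, and
reading `t` jumps just past the next occurrence of `t`. At each state the letters are priced
`1, …, k` in the order in which they next occur. The next occurrences of distinct letters are at
distinct positions, so a letter's price never exceeds the length of the jump it causes, and the
total price of any subword of `σ` is at most the length of `σ`.
-/

open scoped List

theorem val_le_of_strictMono {k : ℕ} {f : Fin k → ℕ} (hf : StrictMono f) (i : Fin k) :
    (i : ℕ) ≤ f i := by
  simpa using Finset.card_le_card_of_injOn (s := Finset.Iio i) (t := Finset.Iio (f i)) f
    (fun j hj => by simpa using hf (by simpa using hj)) hf.injective.injOn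

theorem sort_symm_le_of_injective {k : ℕ} {f : Fin k → ℕ} (hf : Function.Injective f)
    (t : Fin k) : ((Tuple.sort f).symm t : ℕ) ≤ f t := by
  have hsort : StrictMono (f ∘ Tuple.sort f) :=
    (Tuple.monotone_sort f).strictMono_of_injective (hf.comp (Tuple.sort f).injective)
  simpa using val_le_of_strictMono hsort ((Tuple.sort f).symm t)

/-- The ranking (from `0`) of the letters of `[k]` by their first occurrence in `u`. Appending the
whole alphabet to `u` ranks the letters that do not occur in `u` after all those that do. -/
def firstOccurrenceRank {k : ℕ} (u : List (Fin k)) : Equiv.Perm (Fin k) :=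
  (Tuple.sort fun t => (u ++ List.finRange k).idxOf t).symm

theorem firstOccurrenceRank_le_idxOf {k : ℕ} {u : List (Fin k)} {t : Fin k} (ht : t ∈ u) :
    (firstOccurrenceRank u t : ℕ) ≤ u.idxOf t := by
  have hinj : Function.Injective fun t => (u ++ List.finRange k).idxOf t :=
    fun a _ hab => (List.idxOf_inj (List.mem_append_right u (List.mem_finRange a))).1 hab
  exact (sort_symm_le_of_injective hinj t).trans_eq (List.idxOf_append_of_mem ht)

theorem sublist_drop_idxOf_of_cons_sublist {α : Type*} [DecidableEq α] {a : α} {w u : List α}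
    (h : a :: w <+ u) : w <+ u.drop (u.idxOf a + 1) := by
  obtain ⟨u₁, u₂, rfl, ha, hw⟩ := List.cons_sublist_iff.1 h
  have hidx : (u₁ ++ u₂).idxOf a + 1 ≤ u₁.length := by
    simpa [List.idxOf_append_of_mem ha] using List.idxOf_lt_length_of_mem ha
  calc
    w <+ u₂ := hw
    _ = (u₁ ++ u₂).drop u₁.length := List.drop_left.symm
    _ <+ (u₁ ++ u₂).drop ((u₁ ++ u₂).idxOf a + 1) := List.drop_sublist_drop_left _ hidx

theorem ofFn_comp_sublist {α : Type*} {m n : ℕ} {i : Fin m → Fin n} (hi : StrictMono i)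
    (f : Fin n → α) : List.ofFn (f ∘ i) <+ List.ofFn f := by
  have hpositions : List.ofFn i <+ List.finRange n :=
    List.sublist_of_subperm_of_sortedLE
      ((List.nodup_ofFn.2 hi.injective).subperm fun _ _ => List.mem_finRange _)
      hi.monotone.sortedLE_ofFn (List.sortedLT_finRange n).sortedLE
  simpa only [← List.ofFn_eq_map, List.map_ofFn] using hpositions.map f

theorem eq_id_of_strictMono {α : Type*} [LinearOrder α] [WellFoundedLT α] [WellFoundedGT α]
    {f : α → α} (hf : StrictMono f) : f = id :=
  le_antisymm hf.le_id hf.id_le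

theorem permWord_sublist_of_containsPattern {k n : ℕ} {σ : Fin n → Fin k} {τ : Equiv.Perm (Fin k)}
    (h : ContainsPattern σ τ) : permWord τ <+ List.ofFn σ := by
  obtain ⟨i, hi, hσ⟩ := h
  have hmono : StrictMono (σ ∘ i ∘ τ.symm) := fun a b hab => (hσ _ _).2 (by simpa using hab)
  have hτ : σ ∘ i = τ := by
    simpa [Function.comp_assoc] using congrArg (· ∘ τ) (eq_id_of_strictMono hmono)
  simpa only [permWord, hτ, List.ofFn_eq_map] using ofFn_comp_sublist hi σ

/-- The part of `σ` still unread at position `v`. -/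
def unreadSuffix {α : Type*} {n : ℕ} (σ : Fin n → α) (v : Fin (n + 1)) : List α :=
  (List.ofFn σ).drop v

section Greedy

variable {k n : ℕ} (σ : Fin n → Fin k)

/-- The greedy automaton of `σ`: its state is a position in `σ`, reading a letter moves just past
its next occurrence, and letters cost `1, …, k` in the order of their next occurrences. A letter
that does not occur any more leads to the final position `n`. -/
def greedyDFA : WDFA k (Fin (n + 1)) where
  trans v t := ⟨min (v + ((unreadSuffix σ v).idxOf t + 1)) n, by omega⟩
  root := 0
  cost v t := ((firstOccurrenceRank (unreadSuffix σ v) t + 1 : ℕ) : ℕ∞)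

theorem greedyDFA_isKDFA : (greedyDFA σ).IsKDFA :=
  fun v => ⟨firstOccurrenceRank (unreadSuffix σ v), fun _ => rfl⟩

theorem unreadSuffix_greedyDFA_trans (v : Fin (n + 1)) (t : Fin k) :
    unreadSuffix σ ((greedyDFA σ).trans v t) =
      (unreadSuffix σ v).drop ((unreadSuffix σ v).idxOf t + 1) := by
  conv_rhs => rw [unreadSuffix, List.drop_drop, List.drop_eq_drop_min, List.length_ofFn]
  rfl

theorem greedyDFA_wordCost_le {w : List (Fin k)} {v : Fin (n + 1)} (h : w <+ unreadSuffix σ v) :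
    (greedyDFA σ).wordCost v w ≤ (unreadSuffix σ v).length := by
  induction w generalizing v with
  | nil => exact zero_le
  | cons t w ih =>
    set u := unreadSuffix σ v
    have ht : t ∈ u := h.subset List.mem_cons_self
    have hrest : w <+ unreadSuffix σ ((greedyDFA σ).trans v t) := by
      rw [unreadSuffix_greedyDFA_trans]
      exact sublist_drop_idxOf_of_cons_sublist h
    have hlen : (u.idxOf t + 1) + (u.drop (u.idxOf t + 1)).length = u.length := by
      have := List.idxOf_lt_length_of_mem ht
      rw [List.length_drop]
      omega
    calc
      (greedyDFA σ).wordCost v (t :: w)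
        = ((firstOccurrenceRank u t + 1 : ℕ) : ℕ∞) +
            (greedyDFA σ).wordCost ((greedyDFA σ).trans v t) w := rfl
      _ ≤ ((u.idxOf t + 1 : ℕ) : ℕ∞) + ((u.drop (u.idxOf t + 1)).length : ℕ∞) := by
        rw [← unreadSuffix_greedyDFA_trans]
        gcongr
        exacts [firstOccurrenceRank_le_idxOf ht, ih hrest]
      _ = u.length := mod_cast hlen

theorem greedyDFA_wordCost_permWord_le {τ : Equiv.Perm (Fin k)} (h : ContainsPattern σ τ) :
    (greedyDFA σ).wordCost (greedyDFA σ).root (permWord τ) ≤ (n : ℕ∞) := by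
  have hw : permWord τ <+ unreadSuffix σ (greedyDFA σ).root :=
    permWord_sublist_of_containsPattern h
  simpa [unreadSuffix, greedyDFA] using greedyDFA_wordCost_le σ hw

end Greedy

theorem card_le_maxCheapPermCount {k n N : ℕ} {D : WDFA k (Fin N)} (hD : D.IsKDFA) :
    Nat.card {τ : Equiv.Perm (Fin k) // D.wordCost D.root (permWord τ) ≤ (n : ℕ∞)} ≤
      maxCheapPermCount k n N := by
  refine le_csSup ⟨Nat.card (Equiv.Perm (Fin k)), ?_⟩ ⟨D, hD, rfl⟩
  rintro _ ⟨D', _, rfl⟩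
  exact Finite.card_subtype_le _

/-- For every `σ ∈ [k]^n` there is a `k`-DFA `D` with states `{0, …, n}` and root `0`
such that every pattern `τ ∈ S_k` of `σ` has `c_D(0, τ) ≤ n`. Consequently
`F(k,n) ≤ G(k,n,n+1)`. -/
theorem exists_kDFA_capturing_patterns (k n : ℕ) :
    (∀ σ : Fin n → Fin k, ∃ D : WDFA k (Fin (n + 1)), D.IsKDFA ∧ D.root = 0 ∧
      ∀ τ : Equiv.Perm (Fin k), ContainsPattern σ τ →
        D.wordCost D.root (permWord τ) ≤ (n : ℕ∞)) ∧
    maxPatternCount k n ≤ maxCheapPermCount k n (n + 1) := by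
  refine ⟨fun σ => ⟨greedyDFA σ, greedyDFA_isKDFA σ, rfl,
    fun _ => greedyDFA_wordCost_permWord_le σ⟩, Finset.sup_le fun σ _ => ?_⟩
  calc
    Nat.card {τ : Equiv.Perm (Fin k) // ContainsPattern σ τ}
      ≤ Nat.card {τ : Equiv.Perm (Fin k) //
          (greedyDFA σ).wordCost (greedyDFA σ).root (permWord τ) ≤ (n : ℕ∞)} :=
        Nat.card_le_card_of_injective _
          (Subtype.impEmbedding _ _ fun _ => greedyDFA_wordCost_permWord_le σ).injective
    _ ≤ maxCheapPermCount k n (n + 1) := card_le_maxCheapPermCount (greedyDFA_isKDFA σ)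
end
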